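/- arXiv:2306.17482 — 3 statements merged into one kernel-verified Lean document; each statement's English description precedes it below -/
import Mathlib

section
/- (1-WLE is equivalent in distinguishing power to 2-WL.) Let G and H be two finite simple graphs with the same number of vertices, with node colorings into a common type α and edge labelings into a common type β, and take all 1-WLE colors and all 2-WL colors in the canonical iterated color types so that colors of different graphs are comparable. Then the following are equivalent: (i) for every round i, the multiset of round-i 1-WLE colors of the vertices of G equals the multiset of round-i 1-WLE colors of the vertices of H; (ii) for every round i, the multiset of round-i 2-WL colors of ordered vertex pairs of G equals the multiset of round-i 2-WL colors of ordered vertex pairs of H. -/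
namespace GT

/-- Multiset of neighbors of `v` in `G`. -/
noncomputable def nbrs {V : Type} [Fintype V] (G : SimpleGraph V) (v : V) : Multiset V :=
  (@Finset.filter V (fun w => G.Adj v w) (fun _ => Classical.propDecidable _) Finset.univ).val

/-- Canonical iterated color types for 1-WL: `A₀ = α`, `A_{i+1} = A_i × Multiset A_i`. -/
def WLColor (α : Type) : ℕ → Type
  | 0 => α
  | i + 1 => WLColor α i × Multiset (WLColor α i)

/-- 1-WL color refinement: `c_{i+1}(v) = (c_i(v), multiset of c_i(w) over neighbors w of v)`. -/
noncomputable def WL {V α : Type} [Fintype V] (G : SimpleGraph V) (c0 : V → α) :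
    (i : ℕ) → V → WLColor α i
  | 0 => c0
  | i + 1 => fun v => (WL G c0 i v, (nbrs G v).map (WL G c0 i))

/-- Canonical iterated color types for 1-WLE: `A₀ = α`, `A_{i+1} = A_i × Multiset (β × A_i)`. -/
def WLEColor (α β : Type) : ℕ → Type
  | 0 => α
  | i + 1 => WLEColor α β i × Multiset (β × WLEColor α β i)

/-- Edge-feature-aware 1-WL (1-WLE):
`c_{i+1}(v) = (c_i(v), multiset of pairs (ℓ(v,w), c_i(w)) over neighbors w of v)`. -/
noncomputable def WLE {V α β : Type} [Fintype V] (G : SimpleGraph V) (ℓ : Sym2 V → β)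
    (c0 : V → α) : (i : ℕ) → V → WLEColor α β i
  | 0 => c0
  | i + 1 => fun v => (WLE G ℓ c0 i v, (nbrs G v).map fun w => (ℓ s(v, w), WLE G ℓ c0 i w))

/-- Canonical iterated color types for 2-WL: the initial color records the pair of node
colors, whether the two vertices are equal, whether they are adjacent, and the edge label if
adjacent; the refined color at round `i+1` is a multiset over round-`i` data. -/
def WL2Color (α β : Type) : ℕ → Type
  | 0 => (α × α) × Bool × Bool × Option β
  | i + 1 => Multiset (WL2Color α β i ⊕ Multiset (WL2Color α β i))

/-- The 2-WL colorings on ordered pairs: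
`C_{i+1}(v₁,v₂) = {C_i(v₁,v₂), {C_i(w,v₂) : w}, {C_i(v₁,w) : w}}` as a multiset. -/
noncomputable def WL2 {V α β : Type} [Fintype V] (G : SimpleGraph V) (c0 : V → α)
    (ℓ : Sym2 V → β) : (i : ℕ) → V × V → WL2Color α β i
  | 0 => fun p =>
      ((c0 p.1, c0 p.2),
        @decide (p.1 = p.2) (Classical.propDecidable _),
        @decide (G.Adj p.1 p.2) (Classical.propDecidable _),
        @ite _ (G.Adj p.1 p.2) (Classical.propDecidable _) (some (ℓ s(p.1, p.2))) none)
  | i + 1 => fun p =>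
      show Multiset (WL2Color α β i ⊕ Multiset (WL2Color α β i)) from
      {Sum.inl (WL2 G c0 ℓ i p),
       Sum.inr (Finset.univ.val.map fun w => WL2 G c0 ℓ i (w, p.2)),
       Sum.inr (Finset.univ.val.map fun w => WL2 G c0 ℓ i (p.1, w))}

/-!
Since `ℓ` is symmetric, everything the initial 2-WL color of `(v, w)` records besides the node
colors is the atomic type of the unordered pair `s(v, w)`. Whenever two graphs have the same
multiset of round-`i` 1-WLE colors, the round-`(i + 1)` color of `v` carries the same information
as the multiset, over all vertices `w`, of the atomic type of `s(v, w)` together with the round-`i`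
color of `w`: the contribution of the non-neighbors is what is left of the global multiset after
removing `v` and its neighbors. By induction, 2-WL colors are therefore determined by the atomic
type and the two 1-WLE colors. Conversely, a 2-WL color determines the atomic type and the
unordered pair of 1-WLE colors. The order is lost because the refined color does not say which
of its two inner multisets fixes the first coordinate, but the diagonal entry of such a multiset
singles out the color of the fixed vertex.
-/

theorem map_eq_map_of_forall_eq {ι κ γ δ : Type*} {s : Multiset ι} {t : Multiset κ}
    {F : ι → γ} {F' : κ → γ} {f : ι → δ} {f' : κ → δ} (h : s.map F = t.map F')
    (hf : ∀ a b, F a = F' b → f a = f' b) : s.map f = t.map f' := by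
  rw [← Multiset.rel_eq, Multiset.rel_map] at h ⊢
  exact h.mono fun a _ b _ => hf a b

theorem map_univ_prod {ι κ γ : Type*} [Fintype ι] [Fintype κ] (f : ι × κ → γ) :
    (Finset.univ : Finset (ι × κ)).val.map f =
      Finset.univ.val.bind fun a => Finset.univ.val.map fun b => f (a, b) := by
  rw [← Finset.univ_product_univ, Finset.product_val]
  simp only [SProd.sprod, Multiset.product, Multiset.map_bind, Multiset.map_map,
    Function.comp_def]

theorem pair_eq_pair_iff_sym2 {γ : Type*} {x y x' y' : γ} :
    ({x, y} : Multiset γ) = {x', y'} ↔ s(x, y) = s(x', y') := by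
  refine ⟨fun h => ?_, fun h => congrArg Sym2.toMultiset h⟩
  simp only [Multiset.insert_eq_cons, Multiset.cons_eq_cons, Multiset.singleton_inj,
    Multiset.singleton_eq_cons_iff] at h
  rw [Sym2.eq_iff]
  grind

theorem inl_inr_inr_eq_iff {γ δ : Type*} {a a' : γ} {x y x' y' : δ} :
    ({Sum.inl a, Sum.inr x, Sum.inr y} : Multiset (γ ⊕ δ)) =
      {Sum.inl a', Sum.inr x', Sum.inr y'} ↔ a = a' ∧ s(x, y) = s(x', y') := by
  rw [← pair_eq_pair_iff_sym2]
  refine ⟨fun h => ⟨?_, ?_⟩, ?_⟩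
  · simpa [Multiset.filterMap_eq_bind] using congrArg (Multiset.filterMap Sum.getLeft?) h
  · simpa [Multiset.filterMap_eq_bind] using congrArg (Multiset.filterMap Sum.getRight?) h
  · rintro ⟨rfl, h⟩
    simpa using congrArg (fun m => Sum.inl a ::ₘ m.map Sum.inr) h

section AtomicType

variable {V W : Type} {β γ : Type*}

open Classical in
/-- The atomic type of an unordered pair of vertices: whether the two vertices coincide, and the
label of the edge joining them, which is `none` exactly when they are not adjacent. -/
noncomputable def atomicType (G : SimpleGraph V) (ℓ : Sym2 V → β) (e : Sym2 V) :
    Bool × Option β :=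
  (decide e.IsDiag, if e ∈ G.edgeSet then some (ℓ e) else none)

/-- The type of an unordered pair of vertices colored by `f`: its atomic type together with the
unordered pair of colors. With `f` a 1-WLE coloring, this is what a 2-WL color determines. -/
noncomputable def pairType (G : SimpleGraph V) (ℓ : Sym2 V → β) (f : V → γ) (e : Sym2 V) :
    (Bool × Option β) × Sym2 γ :=
  (atomicType G ℓ e, e.map f)

/-- The color stored in an entry of a row type, provided the entry comes from the diagonal. -/
def diagonalEntry (x : (Bool × Option β) × γ) : Option γ :=
  if x.1.1 then some x.2 else none

/-- The edge label and the color stored in an entry of a row type, provided the entry comes from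
an edge. -/
def edgeEntry (x : (Bool × Option β) × γ) : Option (β × γ) :=
  x.1.2.map fun b => (b, x.2)

variable [Fintype V] [Fintype W] {G : SimpleGraph V} {H : SimpleGraph W}
  {ℓ : Sym2 V → β} {ℓ' : Sym2 W → β}

/-- The row type of a vertex `v` under a coloring `f`: how `v` relates to each vertex `w`,
non-neighbors included, paired with the color of `w`. It mediates between the neighborhoods seen
by 1-WLE and the rows and columns seen by 2-WL. -/
noncomputable def rowType (G : SimpleGraph V) (ℓ : Sym2 V → β) (f : V → γ) (v : V) :
    Multiset ((Bool × Option β) × γ) :=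
  Finset.univ.val.map fun w => (atomicType G ℓ s(v, w), f w)

theorem mem_nbrs {v w : V} : w ∈ nbrs G v ↔ G.Adj v w := by
  simp [nbrs]

theorem univ_val_eq_cons_nbrs_add_nbrs_compl (G : SimpleGraph V) (v : V) :
    (Finset.univ : Finset V).val = v ::ₘ (nbrs G v + nbrs Gᶜ v) := by
  have hnodup : (v ::ₘ (nbrs G v + nbrs Gᶜ v)).Nodup := by
    have hdisj : Disjoint (nbrs G v) (nbrs Gᶜ v) :=
      Multiset.disjoint_left.2 fun hw hw' => (mem_nbrs.1 hw').2 (mem_nbrs.1 hw)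
    simp only [Multiset.nodup_cons, Multiset.mem_add, mem_nbrs, SimpleGraph.irrefl, or_self,
      not_false_eq_true, true_and, Multiset.nodup_add]
    exact ⟨Finset.nodup _, Finset.nodup _, hdisj⟩
  refine (Multiset.Nodup.ext Finset.univ.nodup hnodup).2 fun w => ?_
  simp only [Finset.mem_val, Finset.mem_univ, Multiset.mem_cons, Multiset.mem_add, mem_nbrs,
    SimpleGraph.compl_adj]
  tauto

theorem rowType_eq_cons (G : SimpleGraph V) (ℓ : Sym2 V → β) (f : V → γ) (v : V) :
    rowType G ℓ f v = ((true, none), f v) ::ₘ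
      (((nbrs G v).map fun w => (ℓ s(v, w), f w)).map (fun x => ((false, some x.1), x.2)) +
        ((nbrs Gᶜ v).map f).map fun c => ((false, none), c)) := by
  rw [rowType, univ_val_eq_cons_nbrs_add_nbrs_compl G v, Multiset.map_cons, Multiset.map_add,
    Multiset.map_map, Multiset.map_map]
  congr 1
  · simp [atomicType]
  congr 1 <;> refine Multiset.map_congr rfl fun w hw => ?_
  · have hvw := mem_nbrs.1 hw
    simp [atomicType, hvw, hvw.ne]
  · have hvw := mem_nbrs.1 hw
    rw [SimpleGraph.compl_adj] at hvw
    simp [atomicType, hvw.1, hvw.2]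

theorem filterMap_diagonalEntry_rowType (G : SimpleGraph V) (ℓ : Sym2 V → β) (f : V → γ)
    (v : V) : (rowType G ℓ f v).filterMap diagonalEntry = {f v} := by
  simp [rowType_eq_cons, diagonalEntry, Multiset.filterMap_eq_bind, Multiset.bind_map]

theorem filterMap_edgeEntry_rowType (G : SimpleGraph V) (ℓ : Sym2 V → β) (f : V → γ)
    (v : V) : (rowType G ℓ f v).filterMap edgeEntry =
      (nbrs G v).map fun w => (ℓ s(v, w), f w) := by
  simp [rowType_eq_cons, edgeEntry, Multiset.filterMap_eq_bind, Multiset.bind_map]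

theorem rowType_eq_rowType_iff {f : V → γ} {f' : W → γ} {v : V} {v' : W} :
    rowType G ℓ f v = rowType H ℓ' f' v' ↔
      f v = f' v' ∧
      ((nbrs G v).map fun w => (ℓ s(v, w), f w)) =
        ((nbrs H v').map fun w => (ℓ' s(v', w), f' w)) ∧
      Finset.univ.val.map f = Finset.univ.val.map f' := by
  constructor
  · intro h
    refine ⟨?_, ?_, map_eq_map_of_forall_eq h fun w w' => congrArg Prod.snd⟩
    · simpa only [filterMap_diagonalEntry_rowType, Multiset.singleton_inj] using
        congrArg (Multiset.filterMap diagonalEntry) h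
    · simpa only [filterMap_edgeEntry_rowType] using
        congrArg (Multiset.filterMap edgeEntry) h
  · rintro ⟨hv, hnbrs, huniv⟩
    have hnbrs_color : (nbrs G v).map f = (nbrs H v').map f' :=
      map_eq_map_of_forall_eq hnbrs fun w w' => congrArg Prod.snd
    have hcompl : (nbrs Gᶜ v).map f = (nbrs Hᶜ v').map f' := by
      simpa only [univ_val_eq_cons_nbrs_add_nbrs_compl G v,
        univ_val_eq_cons_nbrs_add_nbrs_compl H v', Multiset.map_cons, Multiset.map_add, hv,
        hnbrs_color, Multiset.cons_inj_right, add_right_inj] using huniv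
    rw [rowType_eq_cons, rowType_eq_cons, hv, hnbrs, hcompl]

theorem map_pairType_eq_rowType (G : SimpleGraph V) (ℓ : Sym2 V → β) (f : V → γ) (v : V) :
    (Finset.univ.val.map fun w => pairType G ℓ f s(v, w)) =
      rowType G ℓ (fun w => s(f v, f w)) v :=
  rfl

theorem rowType_eq_of_map_pairType_eq {f : V → γ} {f' : W → γ} {v : V} {v' : W}
    (h : (Finset.univ.val.map fun w => pairType G ℓ f s(v, w)) =
      Finset.univ.val.map fun w => pairType H ℓ' f' s(v', w)) :
    rowType G ℓ f v = rowType H ℓ' f' v' := by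
  have hv : f v = f' v' := by
    rw [map_pairType_eq_rowType, map_pairType_eq_rowType] at h
    exact Sym2.diag_injective (rowType_eq_rowType_iff.1 h).1
  refine map_eq_map_of_forall_eq h fun w w' hw => ?_
  simpa only [pairType, Sym2.map_mk, hv, Prod.mk.injEq, Sym2.congr_right] using hw

theorem filterMap_diagonalEntry_map_pairType (G : SimpleGraph V) (ℓ : Sym2 V → β)
    (f : V → γ) :
    (Finset.univ.val.map fun p : V × V => pairType G ℓ f s(p.1, p.2)).filterMap diagonalEntry =
      Finset.univ.val.map fun v => s(f v, f v) := by
  simp only [map_univ_prod, map_pairType_eq_rowType, Multiset.filterMap_bind,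
    filterMap_diagonalEntry_rowType, Multiset.bind_singleton]

end AtomicType

section Refinement

variable {V W α β : Type} [Fintype V] [Fintype W]
  {G : SimpleGraph V} {H : SimpleGraph W} {c : V → α} {c' : W → α}
  {ℓ : Sym2 V → β} {ℓ' : Sym2 W → β}

theorem WLE_succ_eq_iff {i : ℕ} {v : V} {v' : W} :
    WLE G ℓ c (i + 1) v = WLE H ℓ' c' (i + 1) v' ↔
      WLE G ℓ c i v = WLE H ℓ' c' i v' ∧
        ((nbrs G v).map fun w => (ℓ s(v, w), WLE G ℓ c i w)) =
          (nbrs H v').map fun w => (ℓ' s(v', w), WLE H ℓ' c' i w) :=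
  Prod.mk_inj

theorem map_WLE_eq_of_map_WLE_succ_eq {i : ℕ}
    (h : Finset.univ.val.map (WLE G ℓ c (i + 1)) = Finset.univ.val.map (WLE H ℓ' c' (i + 1))) :
    Finset.univ.val.map (WLE G ℓ c i) = Finset.univ.val.map (WLE H ℓ' c' i) :=
  map_eq_map_of_forall_eq h fun _ _ hv => (WLE_succ_eq_iff.1 hv).1

theorem rowType_WLE_eq_iff {i : ℕ} {v : V} {v' : W} :
    rowType G ℓ (WLE G ℓ c i) v = rowType H ℓ' (WLE H ℓ' c' i) v' ↔
      WLE G ℓ c (i + 1) v = WLE H ℓ' c' (i + 1) v' ∧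
        Finset.univ.val.map (WLE G ℓ c i) = Finset.univ.val.map (WLE H ℓ' c' i) := by
  rw [rowType_eq_rowType_iff, WLE_succ_eq_iff, and_assoc]

theorem WL2_zero_eq (G : SimpleGraph V) (c : V → α) (ℓ : Sym2 V → β) (v w : V) :
    WL2 G c ℓ 0 (v, w) = ((c v, c w), (atomicType G ℓ s(v, w)).1,
      (atomicType G ℓ s(v, w)).2.isSome, (atomicType G ℓ s(v, w)).2) := by
  change (_ : (α × α) × Bool × Bool × Option β) = _
  by_cases hvw : G.Adj v w <;> simp [WL2, atomicType, hvw]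

theorem WL2_zero_eq_iff {v w : V} {v' w' : W} :
    WL2 G c ℓ 0 (v, w) = WL2 H c' ℓ' 0 (v', w') ↔
      atomicType G ℓ s(v, w) = atomicType H ℓ' s(v', w') ∧ c v = c' v' ∧ c w = c' w' := by
  rw [WL2_zero_eq, WL2_zero_eq]
  grind

theorem WL2_succ_eq_iff {i : ℕ} {v w : V} {v' w' : W} :
    WL2 G c ℓ (i + 1) (v, w) = WL2 H c' ℓ' (i + 1) (v', w') ↔
      WL2 G c ℓ i (v, w) = WL2 H c' ℓ' i (v', w') ∧
        s(Finset.univ.val.map fun u => WL2 G c ℓ i (u, w),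
          Finset.univ.val.map fun u => WL2 G c ℓ i (v, u)) =
        s(Finset.univ.val.map fun u => WL2 H c' ℓ' i (u, w'),
          Finset.univ.val.map fun u => WL2 H c' ℓ' i (v', u)) :=
  inl_inr_inr_eq_iff

theorem WL2_eq_of_atomicType_eq_of_WLE_eq {i : ℕ}
    (h : Finset.univ.val.map (WLE G ℓ c i) = Finset.univ.val.map (WLE H ℓ' c' i))
    {v w : V} {v' w' : W} (hvw : atomicType G ℓ s(v, w) = atomicType H ℓ' s(v', w'))
    (hv : WLE G ℓ c i v = WLE H ℓ' c' i v') (hw : WLE G ℓ c i w = WLE H ℓ' c' i w') :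
    WL2 G c ℓ i (v, w) = WL2 H c' ℓ' i (v', w') := by
  induction i generalizing v w v' w' with
  | zero => exact WL2_zero_eq_iff.2 ⟨hvw, hv, hw⟩
  | succ i ih =>
    have huniv := map_WLE_eq_of_map_WLE_succ_eq h
    have hv_prev := (WLE_succ_eq_iff.1 hv).1
    have hw_prev := (WLE_succ_eq_iff.1 hw).1
    have hcol : (Finset.univ.val.map fun u => WL2 G c ℓ i (u, w)) =
        Finset.univ.val.map fun u => WL2 H c' ℓ' i (u, w') := by
      refine map_eq_map_of_forall_eq (rowType_WLE_eq_iff.2 ⟨hw, huniv⟩) fun u u' hu => ?_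
      rw [Prod.mk.injEq, Sym2.eq_swap, Sym2.eq_swap (a := w')] at hu
      exact ih huniv hu.1 hu.2 hw_prev
    have hrow : (Finset.univ.val.map fun u => WL2 G c ℓ i (v, u)) =
        Finset.univ.val.map fun u => WL2 H c' ℓ' i (v', u) := by
      refine map_eq_map_of_forall_eq (rowType_WLE_eq_iff.2 ⟨hv, huniv⟩) fun u u' hu => ?_
      rw [Prod.mk.injEq] at hu
      exact ih huniv hu.1 hv_prev hu.2
    exact WL2_succ_eq_iff.2 ⟨ih huniv hvw hv_prev hw_prev, by rw [hcol, hrow]⟩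

theorem map_WL2_eq_of_map_WLE_succ_eq {i : ℕ}
    (h : Finset.univ.val.map (WLE G ℓ c (i + 1)) = Finset.univ.val.map (WLE H ℓ' c' (i + 1))) :
    Finset.univ.val.map (WL2 G c ℓ i) = Finset.univ.val.map (WL2 H c' ℓ' i) := by
  have huniv := map_WLE_eq_of_map_WLE_succ_eq h
  have hrows : (Finset.univ.val.map fun v => Finset.univ.val.map fun w => WL2 G c ℓ i (v, w)) =
      Finset.univ.val.map fun v => Finset.univ.val.map fun w => WL2 H c' ℓ' i (v, w) := by
    refine map_eq_map_of_forall_eq h fun v v' hv => ?_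
    refine map_eq_map_of_forall_eq (rowType_WLE_eq_iff.2 ⟨hv, huniv⟩) fun w w' hw => ?_
    rw [Prod.mk.injEq] at hw
    exact WL2_eq_of_atomicType_eq_of_WLE_eq huniv hw.1 (WLE_succ_eq_iff.1 hv).1 hw.2
  rw [map_univ_prod, map_univ_prod]
  exact congrArg Multiset.join hrows

theorem WLE_succ_eq_of_map_pairType_eq {i : ℕ} {v : V} {v' : W}
    (h : (Finset.univ.val.map fun w => pairType G ℓ (WLE G ℓ c i) s(v, w)) =
      Finset.univ.val.map fun w => pairType H ℓ' (WLE H ℓ' c' i) s(v', w)) :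
    WLE G ℓ c (i + 1) v = WLE H ℓ' c' (i + 1) v' :=
  (rowType_WLE_eq_iff.1 (rowType_eq_of_map_pairType_eq h)).1

theorem pairType_WLE_eq_of_WL2_eq {i : ℕ} {v w : V} {v' w' : W}
    (h : WL2 G c ℓ i (v, w) = WL2 H c' ℓ' i (v', w')) :
    pairType G ℓ (WLE G ℓ c i) s(v, w) = pairType H ℓ' (WLE H ℓ' c' i) s(v', w') := by
  induction i generalizing v w v' w' with
  | zero =>
    obtain ⟨hvw, hv, hw⟩ := WL2_zero_eq_iff.1 h
    exact Prod.ext hvw (congrArg₂ Sym2.mk hv hw)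
  | succ i ih =>
    obtain ⟨hpair, hlines⟩ := WL2_succ_eq_iff.1 h
    refine Prod.ext (congrArg Prod.fst (ih hpair) :) (Sym2.eq_iff.2 ?_)
    rcases Sym2.eq_iff.1 hlines with ⟨hcol, hrow⟩ | ⟨hcol_row, hrow_col⟩
    · refine .inl ⟨WLE_succ_eq_of_map_pairType_eq ?_, WLE_succ_eq_of_map_pairType_eq ?_⟩
      · exact map_eq_map_of_forall_eq hrow fun u u' hu => ih hu
      · refine map_eq_map_of_forall_eq hcol fun u u' hu => ?_
        rw [Sym2.eq_swap, ih hu, Sym2.eq_swap]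
    · refine .inr ⟨WLE_succ_eq_of_map_pairType_eq ?_, WLE_succ_eq_of_map_pairType_eq ?_⟩
      · refine map_eq_map_of_forall_eq hrow_col fun u u' hu => ?_
        rw [ih hu, Sym2.eq_swap]
      · refine map_eq_map_of_forall_eq hcol_row fun u u' hu => ?_
        rw [Sym2.eq_swap, ih hu]

theorem map_WLE_eq_of_map_WL2_eq {i : ℕ}
    (h : Finset.univ.val.map (WL2 G c ℓ i) = Finset.univ.val.map (WL2 H c' ℓ' i)) :
    Finset.univ.val.map (WLE G ℓ c i) = Finset.univ.val.map (WLE H ℓ' c' i) := by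
  have hpairs : (Finset.univ.val.map fun p : V × V => pairType G ℓ (WLE G ℓ c i) s(p.1, p.2)) =
      Finset.univ.val.map fun p : W × W => pairType H ℓ' (WLE H ℓ' c' i) s(p.1, p.2) :=
    map_eq_map_of_forall_eq h fun _ _ => pairType_WLE_eq_of_WL2_eq
  have hdiag := congrArg (Multiset.filterMap diagonalEntry) hpairs
  rw [filterMap_diagonalEntry_map_pairType, filterMap_diagonalEntry_map_pairType] at hdiag
  exact map_eq_map_of_forall_eq hdiag fun _ _ hv => Sym2.diag_injective hv

end Refinement

/-- 1-WLE is equivalent in distinguishing power to 2-WL: for graphs `G`, `H` with the same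
number of vertices, the multisets of 1-WLE colors agree at every round iff the multisets of
2-WL colors of ordered pairs agree at every round. -/
theorem wle_equiv_wl2_distinguishing {V W α β : Type} [Fintype V] [Fintype W]
    (G : SimpleGraph V) (H : SimpleGraph W) (hcard : Fintype.card V = Fintype.card W)
    (cG : V → α) (cH : W → α) (ℓG : Sym2 V → β) (ℓH : Sym2 W → β) :
    (∀ i : ℕ,
      Finset.univ.val.map (WLE G ℓG cG i) = Finset.univ.val.map (WLE H ℓH cH i)) ↔
    (∀ i : ℕ,
      Finset.univ.val.map (fun p : V × V => WL2 G cG ℓG i p) =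
        Finset.univ.val.map (fun p : W × W => WL2 H cH ℓH i p)) := by
  exact ⟨fun h i => map_WL2_eq_of_map_WLE_succ_eq (h (i + 1)),
    fun h i => map_WLE_eq_of_map_WL2_eq (h i)⟩

end GT
end

section
/- Let G₁ and G₂ be finite simple graphs, both strongly regular with the same parameters (n, k, λ, μ), with 0 < μ. Then for every vertex v₁ of G₁ and every vertex v₂ of G₂: (i) the degrees agree, deg_{G₁}(v₁) = deg_{G₂}(v₂) = k; (ii) the sums of distances agree, Σ_u dist_{G₁}(v₁,u) = Σ_u dist_{G₂}(v₂,u), hence the closeness centralities agree; and (iii) the betweenness centralities agree, bc_{G₁}(v₁) = bc_{G₂}(v₂). In particular, strongly regular graphs with the same parameters are indistinguishable by degree, betweenness, or closeness centrality. -/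
namespace GT

/-- `numSP G u v`: the number of shortest paths between `u` and `v`, i.e. the number of
walks from `u` to `v` of length `G.dist u v`. -/
noncomputable def numSP {V : Type} [Fintype V] [DecidableEq V] (G : SimpleGraph V)
    [DecidableRel G.Adj] (u v : V) : ℕ :=
  (G.finsetWalkLength (G.dist u v) u v).card

/-- `numSPvia G w u v`: the number of shortest paths between `u` and `v` having `w` as an
internal vertex (`w` lies on the walk's support and `w ≠ u`, `w ≠ v`). -/
noncomputable def numSPvia {V : Type} [Fintype V] [DecidableEq V] (G : SimpleGraph V)
    [DecidableRel G.Adj] (w u v : V) : ℕ :=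
  ((G.finsetWalkLength (G.dist u v) u v).filter fun p => w ∈ p.support ∧ w ≠ u ∧ w ≠ v).card

/-- Betweenness centrality
`bc(w) = (1/2) · Σ_{u ≠ v, u ≠ w, v ≠ w} σ_w(u,v)/σ(u,v)` (sum over ordered pairs). -/
noncomputable def betweenness {V : Type} [Fintype V] [DecidableEq V] (G : SimpleGraph V)
    [DecidableRel G.Adj] (w : V) : ℚ :=
  (1 / 2) * ∑ u : V, ∑ v : V,
    if u ≠ v ∧ u ≠ w ∧ v ≠ w then (numSPvia G w u v : ℚ) / (numSP G u v : ℚ) else 0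

/-!
Since `0 < μ`, the graph has diameter at most two, so nonadjacent distinct vertices are at distance
two. The shortest paths between them are then the walks `u, x, v` through their `μ` common
neighbours `x`, so `w` is internal to exactly one of them if it is adjacent to both `u` and `v`, and
to none otherwise. Each neighbour `u` of `w` is nonadjacent to `k - λ - 1` of the
other neighbours, which gives `bc(w) = k (k - λ - 1) / (2 μ)`; likewise
`∑ u, dist(w, u) = k + 2 (n - 1 - k)`.
-/

section Diameter

variable {V : Type*} {G : SimpleGraph V}

lemma dist_eq_two_of_compl_adj (hG : G.ediam ≤ 2) {u v : V} (huv : Gᶜ.Adj u v) :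
    G.dist u v = 2 := by
  obtain ⟨hne, hadj⟩ := huv
  have hle : G.edist u v ≤ 2 := SimpleGraph.edist_le_ediam.trans hG
  have hreach : G.Reachable u v :=
    SimpleGraph.reachable_of_edist_ne_top (hle.trans_lt (ENat.natCast_lt_top 2)).ne
  have hle' : G.dist u v ≤ 2 := by exact_mod_cast hreach.coe_dist_eq_edist.trans_le hle
  have hpos : 0 < G.dist u v := hreach.pos_dist_of_ne hne
  have hne_one : G.dist u v ≠ 1 := mt SimpleGraph.dist_eq_one_iff_adj.mp hadj
  lia

lemma dist_le_one_of_not_compl_adj {u v : V} (huv : ¬Gᶜ.Adj u v) : G.dist u v ≤ 1 := by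
  rcases eq_or_ne u v with rfl | hne
  · simp
  · have hadj : G.Adj u v := by simpa [hne] using huv
    exact (SimpleGraph.dist_eq_one_iff_adj.mpr hadj).le

lemma sum_dist_eq_of_ediam_le_two [Fintype V] [DecidableEq V] [DecidableRel G.Adj]
    (hG : G.ediam ≤ 2) (v : V) :
    ∑ u, G.dist v u = G.degree v + 2 * Gᶜ.degree v := by
  have hdist (u : V) :
      G.dist v u = (if G.Adj v u then 1 else 0) + 2 * (if Gᶜ.Adj v u then 1 else 0) := by
    rcases eq_or_ne v u with rfl | hne
    · simp
    · by_cases hadj : G.Adj v u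
      · simp [hadj, SimpleGraph.dist_eq_one_iff_adj.mpr hadj]
      · have hcompl : Gᶜ.Adj v u := ⟨hne, hadj⟩
        simp only [dist_eq_two_of_compl_adj hG hcompl, hadj, hcompl, if_true, if_false]
  simp only [hdist, Finset.sum_add_distrib, ← Finset.mul_sum, ← Finset.card_filter,
    ← SimpleGraph.neighborFinset_eq_filter, SimpleGraph.card_neighborFinset_eq_degree]

end Diameter

section WalksOfLengthTwo

variable {V : Type*} {G : SimpleGraph V} {u v w : V}

lemma mem_support_and_ne_ends_iff_of_length_eq_two :
    ∀ {p : G.Walk u v}, p.length = 2 → (w ∈ p.support ∧ w ≠ u ∧ w ≠ v ↔ w = p.snd)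
  | .cons hux (.cons hxv .nil), _ => by
    have := hux.ne'
    have := hxv.ne
    simp only [SimpleGraph.Walk.support_cons, SimpleGraph.Walk.support_nil, List.mem_cons,
      List.not_mem_nil, SimpleGraph.Walk.snd_cons]
    grind

lemma card_filter_snd_finsetWalkLength_two [DecidableEq V] [G.LocallyFinite]
    [DecidableRel G.Adj] :
    ((G.finsetWalkLength 2 u v).filter fun p ↦ w = p.snd).card =
      if w ∈ G.commonNeighbors u v then 1 else 0 := by
  split_ifs with hw
  · obtain ⟨huw, hvw⟩ := G.mem_commonNeighbors.mp hw
    refine Finset.card_eq_one.mpr ⟨.cons huw (.cons hvw.symm .nil), ?_⟩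
    ext p
    simp only [Finset.mem_filter, SimpleGraph.mem_finsetWalkLength_iff, Finset.mem_singleton]
    constructor
    · rintro ⟨hp, hsnd⟩
      match p, hp with
      | .cons (v := x) _ (.cons _ .nil), _ =>
        obtain rfl : w = x := hsnd
        rfl
    · rintro rfl
      simp
  · rw [Finset.card_eq_zero, Finset.filter_eq_empty_iff]
    rintro p hp rfl
    rw [SimpleGraph.mem_finsetWalkLength_iff] at hp
    exact hw (G.walkLengthTwoEquivCommonNeighbors u v ⟨p, hp⟩).2

end WalksOfLengthTwo

section ShortestPaths

variable {V : Type} [Fintype V] [DecidableEq V] {G : SimpleGraph V} [DecidableRel G.Adj]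
  {u v w : V}

lemma numSP_eq_card_commonNeighbors (huv : G.dist u v = 2) :
    numSP G u v = Fintype.card (G.commonNeighbors u v) := by
  rw [numSP, huv, ← SimpleGraph.card_set_walk_length_eq]
  exact Fintype.card_congr (G.walkLengthTwoEquivCommonNeighbors u v)

lemma numSPvia_eq_zero_of_dist_le_one (huv : G.dist u v ≤ 1) : numSPvia G w u v = 0 := by
  rw [numSPvia, Finset.card_eq_zero, Finset.filter_eq_empty_iff]
  intro p hp
  rw [SimpleGraph.mem_finsetWalkLength_iff] at hp
  match p, hp.trans_le huv with
  | .nil, _ => simp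
  | .cons _ .nil, _ => simpa using by tauto

lemma numSPvia_eq_ite_mem_commonNeighbors (huv : G.dist u v = 2) :
    numSPvia G w u v = if w ∈ G.commonNeighbors u v then 1 else 0 := by
  rw [numSPvia, huv, ← card_filter_snd_finsetWalkLength_two]
  refine congrArg Finset.card (Finset.filter_congr fun p hp ↦ ?_)
  exact mem_support_and_ne_ends_iff_of_length_eq_two (SimpleGraph.mem_finsetWalkLength_iff.mp hp)

lemma numSPvia_div_numSP_of_ediam_le_two (hG : G.ediam ≤ 2) (w u v : V) :
    (numSPvia G w u v : ℚ) / numSP G u v =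
      if G.Adj w u ∧ G.Adj w v ∧ Gᶜ.Adj u v then 1 / (Fintype.card (G.commonNeighbors u v) : ℚ)
      else 0 := by
  by_cases huv : Gᶜ.Adj u v
  · have hdist := dist_eq_two_of_compl_adj hG huv
    simp only [numSPvia_eq_ite_mem_commonNeighbors hdist, numSP_eq_card_commonNeighbors hdist,
      SimpleGraph.mem_commonNeighbors, G.adj_comm w, huv, and_true, Nat.cast_ite, Nat.cast_one,
      Nat.cast_zero, ite_div, zero_div]
  · simp only [numSPvia_eq_zero_of_dist_le_one (dist_le_one_of_not_compl_adj huv), huv,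
      Nat.cast_zero, zero_div, and_false, if_false]

lemma betweenness_eq_sum_numSPvia_div_numSP (G : SimpleGraph V) [DecidableRel G.Adj] (w : V) :
    betweenness G w = 1 / 2 * ∑ u, ∑ v, (numSPvia G w u v : ℚ) / numSP G u v := by
  have hvia {u v : V} (huvw : ¬(u ≠ v ∧ u ≠ w ∧ v ≠ w)) : numSPvia G w u v = 0 := by
    by_cases huv : u = v
    · exact numSPvia_eq_zero_of_dist_le_one (by simp [huv])
    · rw [numSPvia, Finset.card_eq_zero, Finset.filter_eq_empty_iff]
      grind
  rw [betweenness]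
  refine congrArg _ (Finset.sum_congr rfl fun u _ ↦ Finset.sum_congr rfl fun v _ ↦ ?_)
  split_ifs with huvw
  · rfl
  · simp [hvia huvw]

lemma betweenness_eq_sum_of_ediam_le_two (hG : G.ediam ≤ 2) (w : V) :
    betweenness G w = 1 / 2 * ∑ u ∈ G.neighborFinset w,
      ∑ v ∈ G.neighborFinset w ∩ Gᶜ.neighborFinset u,
        1 / (Fintype.card (G.commonNeighbors u v) : ℚ) := by
  simp only [betweenness_eq_sum_numSPvia_div_numSP, numSPvia_div_numSP_of_ediam_le_two hG, ite_and,
    SimpleGraph.neighborFinset_eq_filter, ← Finset.filter_and, Finset.sum_filter,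
    Finset.sum_ite_irrel, Finset.sum_const_zero]

end ShortestPaths

lemma card_neighborFinset_inter_compl_add_card_commonNeighbors_add_one {V : Type*} [Fintype V]
    [DecidableEq V] {G : SimpleGraph V} [DecidableRel G.Adj] {w u : V} (hwu : G.Adj w u) :
    (G.neighborFinset w ∩ Gᶜ.neighborFinset u).card + Fintype.card (G.commonNeighbors w u) + 1 =
      G.degree w := by
  have hcompl : G.neighborFinset w ∩ Gᶜ.neighborFinset u =
      (G.neighborFinset w \ G.neighborFinset u).erase u := by
    ext v
    simp only [Finset.mem_inter, Finset.mem_erase, Finset.mem_sdiff,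
      SimpleGraph.mem_neighborFinset, SimpleGraph.compl_adj]
    tauto
  have hcommon : Fintype.card (G.commonNeighbors w u) =
      (G.neighborFinset w ∩ G.neighborFinset u).card := by
    refine Fintype.card_of_finset' _ fun v ↦ ?_
    rw [Finset.mem_inter, SimpleGraph.mem_neighborFinset, SimpleGraph.mem_neighborFinset,
      SimpleGraph.mem_commonNeighbors]
  have hu : u ∈ G.neighborFinset w \ G.neighborFinset u := by simpa using hwu
  rw [hcompl, hcommon, add_right_comm, Finset.card_erase_add_one hu,
    Finset.card_sdiff_add_card_inter, SimpleGraph.card_neighborFinset_eq_degree]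

section StronglyRegular

variable {n k l m : ℕ}

lemma ediam_le_two_of_isSRGWith {V : Type*} [Fintype V] {G : SimpleGraph V} [DecidableRel G.Adj]
    (h : G.IsSRGWith n k l m) (hm : 0 < m) : G.ediam ≤ 2 := by
  rw [SimpleGraph.ediam_le_iff]
  intro u v
  by_contra! hlt
  obtain ⟨hne, hadj, hempty⟩ := SimpleGraph.two_lt_edist_iff.mp hlt
  have hcard := h.of_not_adj hne hadj
  simp only [hempty, Fintype.card_eq_zero] at hcard
  lia

lemma sum_dist_of_isSRGWith {V : Type*} [Fintype V] {G : SimpleGraph V} [DecidableRel G.Adj]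
    (h : G.IsSRGWith n k l m) (hm : 0 < m) (v : V) :
    ∑ u, G.dist v u = k + 2 * (n - 1 - k) := by
  classical
  rw [sum_dist_eq_of_ediam_le_two (ediam_le_two_of_isSRGWith h hm), SimpleGraph.degree_compl,
    h.regular.degree_eq, h.card]

lemma betweenness_of_isSRGWith {V : Type} [Fintype V] [DecidableEq V] {G : SimpleGraph V}
    [DecidableRel G.Adj] (h : G.IsSRGWith n k l m) (hm : 0 < m) (w : V) :
    betweenness G w = k * (k - l - 1) / (2 * m) := by
  have hcount {u : V} (hu : u ∈ G.neighborFinset w) :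
      ((G.neighborFinset w ∩ Gᶜ.neighborFinset u).card : ℚ) = k - l - 1 := by
    rw [SimpleGraph.mem_neighborFinset] at hu
    have hdegree := card_neighborFinset_inter_compl_add_card_commonNeighbors_add_one hu
    rw [h.of_adj w u hu, h.regular.degree_eq] at hdegree
    rw [← hdegree]
    push_cast
    ring
  have hcommon {u v : V} (hv : v ∈ G.neighborFinset w ∩ Gᶜ.neighborFinset u) :
      Fintype.card (G.commonNeighbors u v) = m := by
    obtain ⟨hne, hadj⟩ := (Gᶜ.mem_neighborFinset u v).mp (Finset.mem_of_mem_inter_right hv)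
    exact h.of_not_adj hne hadj
  have hinner {u : V} (hu : u ∈ G.neighborFinset w) :
      ∑ v ∈ G.neighborFinset w ∩ Gᶜ.neighborFinset u,
        1 / (Fintype.card (G.commonNeighbors u v) : ℚ) = (k - l - 1) / m := by
    rw [Finset.sum_congr rfl fun v hv ↦ by rw [hcommon hv], Finset.sum_const, nsmul_eq_mul,
      hcount hu, mul_one_div]
  rw [betweenness_eq_sum_of_ediam_le_two (ediam_le_two_of_isSRGWith h hm),
    Finset.sum_congr rfl fun u hu ↦ hinner hu, Finset.sum_const, nsmul_eq_mul,
    SimpleGraph.card_neighborFinset_eq_degree, h.regular.degree_eq]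
  field_simp

end StronglyRegular

/-- Strongly regular graphs with the same parameters are indistinguishable by degree,
closeness, or betweenness centrality. -/
theorem srg_same_params_indistinguishable {V₁ V₂ : Type} [Fintype V₁] [Fintype V₂]
    [DecidableEq V₁] [DecidableEq V₂] (G₁ : SimpleGraph V₁) (G₂ : SimpleGraph V₂)
    [DecidableRel G₁.Adj] [DecidableRel G₂.Adj] {n k l m : ℕ}
    (h₁ : G₁.IsSRGWith n k l m) (h₂ : G₂.IsSRGWith n k l m) (hm : 0 < m) :
    ∀ (v₁ : V₁) (v₂ : V₂),
      G₁.degree v₁ = k ∧ G₂.degree v₂ = k ∧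
      (∑ u : V₁, G₁.dist v₁ u) = (∑ u : V₂, G₂.dist v₂ u) ∧
      ((n : ℚ) - 1) / (∑ u : V₁, (G₁.dist v₁ u : ℚ)) =
        ((n : ℚ) - 1) / (∑ u : V₂, (G₂.dist v₂ u : ℚ)) ∧
      betweenness G₁ v₁ = betweenness G₂ v₂ := by
  intro v₁ v₂
  have hdist : ∑ u, G₁.dist v₁ u = ∑ u, G₂.dist v₂ u := by
    rw [sum_dist_of_isSRGWith h₁ hm, sum_dist_of_isSRGWith h₂ hm]
  refine ⟨h₁.regular.degree_eq v₁, h₂.regular.degree_eq v₂, hdist, ?_, ?_⟩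
  · rw [← Nat.cast_sum, ← Nat.cast_sum, hdist]
  · rw [betweenness_of_isSRGWith h₁ hm, betweenness_of_isSRGWith h₂ hm]

end GT
end

section
/- Let G be a finite simple graph that is strongly regular with parameters (n, k, λ, μ) and assume 0 < μ. Then for every vertex w, the sum of distances from w satisfies, as rational numbers, Σ_v G.dist w v = deg(w) + 4·bc(w); equivalently, the closeness centrality satisfies cc(w) = (n−1)/(deg(w) + 4·bc(w)). -/
namespace GT

/-!
If nonadjacent vertices have exactly `μ > 0` common neighbors, they are at distance two and the
internal vertices of their `μ` shortest paths are those common neighbors. Hence the distances from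
`w` sum to `deg w + 2 N`, with `N` the number of vertices other than `w` not adjacent to it, and
`2 bc(w)` is `1 / μ` times the number of ordered pairs of distinct nonadjacent neighbors of `w`.
When a neighbor `u` of `w` has the same degree as `w`, it has as many neighbors outside the closed
neighborhood of `w` as `w` has outside that of `u`; so the number of those pairs is the number of
edges leaving the closed neighborhood of `w`, which is `μ N` when counted from the other end.
-/

section

open Finset SimpleGraph

variable {V : Type*} {G : SimpleGraph V} {u v w : V}

lemma dist_eq_two_of_card_commonNeighbors_pos [Fintype (G.commonNeighbors u v)]
    (huv : Gᶜ.Adj u v) (hpos : 0 < Fintype.card (G.commonNeighbors u v)) : G.dist u v = 2 := by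
  have hne : (G.commonNeighbors u v).Nonempty :=
    Set.nonempty_coe_sort.mp (Fintype.card_pos_iff.mp hpos)
  have hedist : G.edist u v = 2 := edist_eq_two_iff.mpr ⟨huv.1, huv.2, hne⟩
  simp [SimpleGraph.dist, hedist]

lemma exists_eq_cons_cons_nil_of_length_eq_two {p : G.Walk u v} (hp : p.length = 2) :
    ∃ (x : V) (hux : G.Adj u x) (hxv : G.Adj x v), p = .cons hux (.cons hxv .nil) := by
  match p, hp with
  | .cons hux (.cons hxv .nil), _ => exact ⟨_, hux, hxv, rfl⟩

variable [Fintype V] [DecidableEq V] [DecidableRel G.Adj]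

lemma sum_dist_eq_degree_add_two_mul_degree_compl (hdist : ∀ v, Gᶜ.Adj w v → G.dist w v = 2) :
    ∑ v, G.dist w v = G.degree w + 2 * Gᶜ.degree w := by
  have dist_eq_indicators (v : V) :
      G.dist w v = (if G.Adj w v then 1 else 0) + 2 * (if Gᶜ.Adj w v then 1 else 0) := by
    by_cases hwv : w = v
    · simp [hwv]
    by_cases hadj : G.Adj w v
    · simp [dist_eq_one_iff_adj.mpr hadj, hadj]
    · simp [hdist v ⟨hwv, hadj⟩, hadj, hwv]
  simp_rw [dist_eq_indicators, sum_add_distrib, ← mul_sum, sum_boole, Nat.cast_id,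
    ← neighborFinset_eq_filter, card_neighborFinset_eq_degree]

lemma card_neighborFinset_inter_neighborFinset_compl_comm (hdeg : G.degree u = G.degree w) :
    #(G.neighborFinset u ∩ Gᶜ.neighborFinset w) = #(G.neighborFinset w ∩ Gᶜ.neighborFinset u) := by
  have inter_compl_eq_erase (x y : V) : G.neighborFinset x ∩ Gᶜ.neighborFinset y =
      (G.neighborFinset x \ G.neighborFinset y).erase y := by
    rw [neighborFinset_compl, ← inter_sdiff_assoc, ← sdiff_eq_inter_compl, sdiff_singleton_eq_erase]
  have card_sdiff_eq : #(G.neighborFinset u \ G.neighborFinset w) =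
      #(G.neighborFinset w \ G.neighborFinset u) := card_sdiff_comm hdeg
  simp only [inter_compl_eq_erase, card_erase_eq_ite, card_sdiff_eq, mem_sdiff,
    mem_neighborFinset, SimpleGraph.irrefl, not_false_eq_true, and_true, G.adj_comm u w]

lemma sum_card_neighborFinset_inter_neighborFinset_compl (w : V) :
    ∑ u ∈ G.neighborFinset w, #(G.neighborFinset u ∩ Gᶜ.neighborFinset w) =
      ∑ x ∈ Gᶜ.neighborFinset w, Fintype.card (G.commonNeighbors w x) := by
  convert sum_card_bipartiteAbove_eq_sum_card_bipartiteBelow G.Adj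
    (s := G.neighborFinset w) (t := Gᶜ.neighborFinset w) using 2 with u _ x _
  · congr 1
    ext x
    simp [and_comm]
  · refine Fintype.card_of_subtype _ fun u => ?_
    simp [mem_commonNeighbors, G.adj_comm x]

lemma sum_card_nonadjacent_neighbors_eq_degree_compl_mul {m : ℕ}
    (hcn : ∀ x, Gᶜ.Adj w x → Fintype.card (G.commonNeighbors w x) = m)
    (hdeg : ∀ u, G.Adj w u → G.degree u = G.degree w) :
    ∑ u ∈ G.neighborFinset w, #(G.neighborFinset w ∩ Gᶜ.neighborFinset u) =
      Gᶜ.degree w * m := by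
  calc
    _ = ∑ u ∈ G.neighborFinset w, #(G.neighborFinset u ∩ Gᶜ.neighborFinset w) :=
      sum_congr rfl fun u hu => (card_neighborFinset_inter_neighborFinset_compl_comm <|
        hdeg u <| (G.mem_neighborFinset w u).mp hu).symm
    _ = ∑ x ∈ Gᶜ.neighborFinset w, Fintype.card (G.commonNeighbors w x) :=
      sum_card_neighborFinset_inter_neighborFinset_compl w
    _ = Gᶜ.degree w * m :=
      sum_const_nat fun x hx => hcn x <| (Gᶜ.mem_neighborFinset w x).mp hx

end

section

open Finset SimpleGraph

variable {V : Type} [Fintype V] [DecidableEq V] {G : SimpleGraph V} [DecidableRel G.Adj]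
  {u v w : V} {m : ℕ}

lemma numSP_of_dist_eq_two (hd : G.dist u v = 2) :
    numSP G u v = Fintype.card (G.commonNeighbors u v) := by
  rw [numSP, hd, ← Fintype.card_congr (G.walkLengthTwoEquivCommonNeighbors u v)]
  exact (Fintype.card_of_subtype _ fun _ => mem_finsetWalkLength_iff).symm

lemma numSPvia_of_adj (huv : G.Adj u v) : numSPvia G w u v = 0 := by
  rw [numSPvia, dist_eq_one_iff_adj.mpr huv, card_eq_zero, filter_eq_empty_iff]
  rintro p hp ⟨hw, hwu, hwv⟩
  match p, mem_finsetWalkLength_iff.mp hp with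
  | .cons _ .nil, _ => simp [hwu, hwv] at hw

lemma numSPvia_of_dist_eq_two (hd : G.dist u v = 2) :
    numSPvia G w u v = if G.Adj w u ∧ G.Adj w v then 1 else 0 := by
  have eq_of_internal {x : V} {hux : G.Adj u x} {hxv : G.Adj x v}
      (hw : w ∈ (Walk.cons hux (.cons hxv .nil)).support) (hwu : w ≠ u) (hwv : w ≠ v) : w = x := by
    simpa [hwu, hwv] using hw
  rw [numSPvia, hd]
  split_ifs with hadj
  · refine card_eq_one.mpr ⟨.cons hadj.1.symm (.cons hadj.2 .nil), ?_⟩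
    ext p
    rw [mem_filter, mem_finsetWalkLength_iff, mem_singleton]
    constructor
    · rintro ⟨hp, hw, hwu, hwv⟩
      obtain ⟨x, hux, hxv, rfl⟩ := exists_eq_cons_cons_nil_of_length_eq_two hp
      obtain rfl := eq_of_internal hw hwu hwv
      rfl
    · rintro rfl
      simp [hadj.1.ne, hadj.2.ne]
  · rw [card_eq_zero, filter_eq_empty_iff]
    rintro p hp ⟨hw, hwu, hwv⟩
    obtain ⟨x, hux, hxv, rfl⟩ :=
      exists_eq_cons_cons_nil_of_length_eq_two (mem_finsetWalkLength_iff.mp hp)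
    obtain rfl := eq_of_internal hw hwu hwv
    exact hadj ⟨hux.symm, hxv⟩

lemma two_mul_betweenness_eq_sum_inv_card_commonNeighbors
    (hdist : ∀ u v, Gᶜ.Adj u v → G.dist u v = 2) (w : V) :
    2 * betweenness G w = ∑ u ∈ G.neighborFinset w,
      ∑ v ∈ G.neighborFinset w ∩ Gᶜ.neighborFinset u,
        (Fintype.card (G.commonNeighbors u v) : ℚ)⁻¹ := by
  have summand_eq (u v : V) :
      (if u ≠ v ∧ u ≠ w ∧ v ≠ w then (numSPvia G w u v : ℚ) / numSP G u v else 0) =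
        if G.Adj w u then
          if G.Adj w v ∧ Gᶜ.Adj u v then (Fintype.card (G.commonNeighbors u v) : ℚ)⁻¹ else 0
        else 0 := by
    by_cases huv : u = v
    · simp [huv]
    by_cases hadj : G.Adj u v
    · simp [numSPvia_of_adj hadj, hadj]
    have hd : G.dist u v = 2 := hdist u v ⟨huv, hadj⟩
    rw [numSPvia_of_dist_eq_two hd, numSP_of_dist_eq_two hd]
    by_cases hwu : G.Adj w u
    · by_cases hwv : G.Adj w v
      · simp [huv, hadj, hwu, hwv, hwu.ne', hwv.ne']
      · simp [hwv]
    · simp [hwu]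
  rw [betweenness, ← mul_assoc, mul_one_div_cancel two_ne_zero, one_mul]
  simp_rw [summand_eq, neighborFinset_eq_filter, ← filter_and, sum_filter]
  refine sum_congr rfl fun u _ => ?_
  split_ifs <;> simp

lemma two_mul_betweenness_eq_degree_compl (hm : 0 < m)
    (hcn : ∀ u v, Gᶜ.Adj u v → Fintype.card (G.commonNeighbors u v) = m)
    (hdeg : ∀ u, G.Adj w u → G.degree u = G.degree w) :
    2 * betweenness G w = Gᶜ.degree w := by
  have hdist (u v : V) (huv : Gᶜ.Adj u v) : G.dist u v = 2 :=
    dist_eq_two_of_card_commonNeighbors_pos huv (hcn u v huv ▸ hm)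
  have inner_sum_eq (u : V) : ∑ v ∈ G.neighborFinset w ∩ Gᶜ.neighborFinset u,
      (Fintype.card (G.commonNeighbors u v) : ℚ)⁻¹ =
        #(G.neighborFinset w ∩ Gᶜ.neighborFinset u) * (m : ℚ)⁻¹ := by
    rw [← nsmul_eq_mul]
    refine sum_eq_card_nsmul fun v hv => ?_
    rw [hcn u v ((Gᶜ.mem_neighborFinset u v).mp (mem_inter.mp hv).2)]
  rw [two_mul_betweenness_eq_sum_inv_card_commonNeighbors hdist,
    sum_congr rfl fun u _ => inner_sum_eq u, ← sum_mul, ← Nat.cast_sum,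
    sum_card_nonadjacent_neighbors_eq_degree_compl_mul (hcn w) hdeg, Nat.cast_mul,
    mul_inv_cancel_right₀ (Nat.cast_ne_zero.mpr hm.ne')]

end

theorem srg_closeness_degree_betweenness_general {V : Type} [Fintype V] [DecidableEq V]
    (G : SimpleGraph V) [DecidableRel G.Adj] {m : ℕ} (hm : 0 < m)
    (hcn : ∀ u v, Gᶜ.Adj u v → Fintype.card (G.commonNeighbors u v) = m)
    (w : V) (hdeg : ∀ u, G.Adj w u → G.degree u = G.degree w) :
    (∑ v : V, (G.dist w v : ℚ)) = (G.degree w : ℚ) + 4 * betweenness G w ∧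
      ((Fintype.card V : ℚ) - 1) / (∑ v : V, (G.dist w v : ℚ)) =
        ((Fintype.card V : ℚ) - 1) / ((G.degree w : ℚ) + 4 * betweenness G w) := by
  have hdist (v : V) (hwv : Gᶜ.Adj w v) : G.dist w v = 2 :=
    dist_eq_two_of_card_commonNeighbors_pos hwv (hcn w v hwv ▸ hm)
  have sum_dist_eq : (∑ v : V, (G.dist w v : ℚ)) = G.degree w + 4 * betweenness G w := by
    calc
      (∑ v : V, (G.dist w v : ℚ)) = G.degree w + 2 * Gᶜ.degree w := by
        exact_mod_cast sum_dist_eq_degree_add_two_mul_degree_compl hdist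
      _ = G.degree w + 4 * betweenness G w := by
        rw [← two_mul_betweenness_eq_degree_compl hm hcn hdeg]
        ring
  exact ⟨sum_dist_eq, by rw [sum_dist_eq]⟩

/-- In a strongly regular graph with `0 < μ`, for every vertex `w`:
`Σ_v dist w v = deg(w) + 4·bc(w)` (as rationals), equivalently
`cc(w) = (n-1)/(deg(w) + 4·bc(w))`. -/
theorem srg_closeness_degree_betweenness {V : Type} [Fintype V] [DecidableEq V]
    (G : SimpleGraph V) [DecidableRel G.Adj] {n k l m : ℕ}
    (hG : G.IsSRGWith n k l m) (hm : 0 < m) :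
    ∀ w : V,
      (∑ v : V, (G.dist w v : ℚ)) = (G.degree w : ℚ) + 4 * betweenness G w ∧
      ((n : ℚ) - 1) / (∑ v : V, (G.dist w v : ℚ)) =
        ((n : ℚ) - 1) / ((G.degree w : ℚ) + 4 * betweenness G w) :=
  fun w => hG.card ▸ srg_closeness_degree_betweenness_general G hm
    (fun _ _ huv => hG.of_not_adj huv.1 huv.2) w
    fun u _ => (hG.regular u).trans (hG.regular w).symm

end GT
end
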